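/- Let h = x^{a1}y^{a2} + y^{a1}z^{a2} + z^{a1}x^{a2} be a symmetric trinomial of degree d = a1 + a2 ≥ 4 with a1 > d/2 and a2 ≥ 1, and set α = 2a1 − d and λ = a1² − a1·a2 + a2². Let l ≥ 2 and s ≥ 0 be integers with 2λ < 3·l^s·α and 3·l^s·α < 4λ. Then the least integer s' ≥ 0 for which there exists u ∈ L_odd with |l^{s'}·α/λ − u1| + |l^{s'}·α/λ − u2| + |l^{s'}·α/λ − u3| < 1 is s' = s, and for s' = s the value of this sum equals 3·|l^s·α/λ − 1|. -/

import Mathlib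

/-!
Split `u ∈ L_odd` by parity: an even coordinate `uᵢ` is at distance at least `|xᵢ|` from `xᵢ`,
an odd one at distance at least `1 - |xᵢ|`, and either one or three coordinates are odd. Hence
`Td(x, u) ≥ 1` as soon as the `|xᵢ|` satisfy the triangle inequalities and have sum at most `2`;
on the diagonal `x = (t, t, t)` this says `|t| ≤ 2/3`. The hypotheses put `t = l ^ s * α / λ` within
`1/3` of `1`, so `(1, 1, 1)` is at distance less than `1` from `(t, t, t)`, while each smaller
exponent divides `t` by at least `2` and lands in the range `0 < t < 2/3`.
-/

/-- The taxicab distance `Td(x, u)` between a point `x` of the space `K³` and a lattice point `u`,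
both given by their coordinates. Membership of `u` in `L_odd` is expressed by
`Odd (u₁ + u₂ + u₃)`. -/
def taxicabDist {K : Type*} [Ring K] [LinearOrder K] (x₁ x₂ x₃ : K) (u₁ u₂ u₃ : ℤ) : K :=
  |x₁ - u₁| + |x₂ - u₂| + |x₃ - u₃|

theorem taxicabDist_diag_one {K : Type*} [CommRing K] [LinearOrder K] (t : K) :
    taxicabDist t t t 1 1 1 = 3 * |t - 1| := by
  simp only [taxicabDist, Int.cast_one]
  ring

section OrderedRing

variable {K : Type*} [CommRing K] [LinearOrder K] [IsStrictOrderedRing K]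

theorem one_sub_abs_le_abs_sub_intCast (x : K) {u : ℤ} (hu : u ≠ 0) : 1 - |x| ≤ |x - u| := by
  have one_le_abs : (1 : K) ≤ |(u : K)| := mod_cast Int.one_le_abs hu
  linarith [abs_sub_abs_le_abs_sub (u : K) x, abs_sub_comm (u : K) x]

theorem abs_le_abs_sub_intCast_of_even {x : K} (hx : |x| ≤ 1) {u : ℤ} (hu : Even u) :
    |x| ≤ |x - u| := by
  rcases eq_or_ne u 0 with rfl | hu0
  · simp
  · have two_le_abs : (2 : K) ≤ |(u : K)| := by
      exact_mod_cast Int.le_of_dvd (abs_pos.mpr hu0) ((dvd_abs 2 u).mpr hu.two_dvd)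
    linarith [abs_sub_abs_le_abs_sub (u : K) x, abs_sub_comm (u : K) x]

theorem one_le_taxicabDist_of_odd {x₁ x₂ x₃ : K} (h₁ : |x₁| ≤ |x₂| + |x₃|)
    (h₂ : |x₂| ≤ |x₁| + |x₃|) (h₃ : |x₃| ≤ |x₁| + |x₂|) (hsum : |x₁| + |x₂| + |x₃| ≤ 2)
    {u₁ u₂ u₃ : ℤ} (hu : Odd (u₁ + u₂ + u₃)) : 1 ≤ taxicabDist x₁ x₂ x₃ u₁ u₂ u₃ := by
  have odd_bound (x : K) {u : ℤ} (h : Odd u) : 1 - |x| ≤ |x - u| :=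
    one_sub_abs_le_abs_sub_intCast x (by rintro rfl; exact Int.not_odd_zero h)
  have even_bound₁ : Even u₁ → |x₁| ≤ |x₁ - u₁| :=
    abs_le_abs_sub_intCast_of_even (by linarith)
  have even_bound₂ : Even u₂ → |x₂| ≤ |x₂ - u₂| :=
    abs_le_abs_sub_intCast_of_even (by linarith)
  have even_bound₃ : Even u₃ → |x₃| ≤ |x₃ - u₃| :=
    abs_le_abs_sub_intCast_of_even (by linarith)
  unfold taxicabDist
  rcases Int.even_or_odd u₁ with e₁ | o₁ <;> rcases Int.even_or_odd u₂ with e₂ | o₂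
  · have o₃ : Odd u₃ := by grind
    linarith [even_bound₁ e₁, even_bound₂ e₂, odd_bound x₃ o₃]
  · have e₃ : Even u₃ := by grind
    linarith [even_bound₁ e₁, odd_bound x₂ o₂, even_bound₃ e₃]
  · have e₃ : Even u₃ := by grind
    linarith [odd_bound x₁ o₁, even_bound₂ e₂, even_bound₃ e₃]
  · have o₃ : Odd u₃ := by grind
    linarith [odd_bound x₁ o₁, odd_bound x₂ o₂, odd_bound x₃ o₃]

theorem one_le_taxicabDist_diag_of_odd {t : K} (ht : 3 * |t| ≤ 2) {u₁ u₂ u₃ : ℤ}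
    (hu : Odd (u₁ + u₂ + u₃)) : 1 ≤ taxicabDist t t t u₁ u₂ u₃ :=
  have triangle : |t| ≤ |t| + |t| := le_add_of_nonneg_left (abs_nonneg t)
  one_le_taxicabDist_of_odd triangle triangle triangle (by linarith) hu

theorem two_mul_pow_le_pow_of_lt {l : K} (hl : 2 ≤ l) {m n : ℕ} (hmn : m < n) :
    2 * l ^ m ≤ l ^ n :=
  calc 2 * l ^ m ≤ l * l ^ m := by gcongr
    _ = l ^ (m + 1) := (pow_succ' l m).symm
    _ ≤ l ^ n := pow_le_pow_right₀ (by linarith) hmn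

end OrderedRing

theorem stmt_17_general {K : Type*} [Field K] [LinearOrder K] [IsStrictOrderedRing K]
    {l α lam : K} (hl : 2 ≤ l) {s : ℕ} (hlow : 2 * lam < 3 * l ^ s * α)
    (hhigh : 3 * l ^ s * α < 4 * lam) :
    (∀ s' : ℕ, s' < s → ¬ ∃ u₁ u₂ u₃ : ℤ, Odd (u₁ + u₂ + u₃) ∧
      taxicabDist (l ^ s' * α / lam) (l ^ s' * α / lam) (l ^ s' * α / lam) u₁ u₂ u₃ < 1) ∧
    ∃ u₁ u₂ u₃ : ℤ, Odd (u₁ + u₂ + u₃) ∧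
      taxicabDist (l ^ s * α / lam) (l ^ s * α / lam) (l ^ s * α / lam) u₁ u₂ u₃ < 1 ∧
      taxicabDist (l ^ s * α / lam) (l ^ s * α / lam) (l ^ s * α / lam) u₁ u₂ u₃ =
        3 * |l ^ s * α / lam - 1| := by
  have lam_pos : 0 < lam := by linarith
  have : 0 < l := by linarith
  have α_pos : 0 < α := pos_of_mul_pos_right (by linarith) (by positivity : 0 ≤ 3 * l ^ s)
  refine ⟨?_, 1, 1, 1, by decide, ?_, taxicabDist_diag_one _⟩
  · rintro s' hs' ⟨u₁, u₂, u₃, hu, hdist⟩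
    refine hdist.not_ge (one_le_taxicabDist_diag_of_odd ?_ hu)
    have halved : 2 * l ^ s' * α ≤ l ^ s * α := by
      gcongr
      exact two_mul_pow_le_pow_of_lt hl hs'
    rw [abs_of_pos (by positivity), ← mul_div_assoc, div_le_iff₀ lam_pos]
    linarith
  · have lower : 2 / 3 < l ^ s * α / lam := by rw [lt_div_iff₀ lam_pos]; linarith
    have upper : l ^ s * α / lam < 4 / 3 := by rw [div_lt_iff₀ lam_pos]; linarith
    have near_one : |l ^ s * α / lam - 1| < 1 / 3 := abs_lt.mpr ⟨by linarith, by linarith⟩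
    rw [taxicabDist_diag_one]
    linarith

/-- Corollary 4.7, first part: for a symmetric trinomial, if 3l^s/4 < λ/α < 3l^s/2 then
Δ_{h,1}(l) = (3|l^s·α/λ − 1|, s). -/
theorem stmt_17 (a1 a2 d α lam : ℤ) (hd : d = a1 + a2)
    (ha2 : 1 ≤ a2) (h2a1 : 2 * a1 > d) (hd4 : 4 ≤ d)
    (hα : α = 2 * a1 - d) (hlam : lam = a1 ^ 2 - a1 * a2 + a2 ^ 2)
    (l : ℤ) (hl : 2 ≤ l) (s : ℕ)
    (hlow : 2 * lam < 3 * l ^ s * α) (hhigh : 3 * l ^ s * α < 4 * lam) :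
    (∀ s' : ℕ, s' < s → ¬ ∃ u1 u2 u3 : ℤ, Odd (u1 + u2 + u3) ∧
      |(l ^ s' * α : ℝ) / (lam : ℝ) - (u1 : ℝ)| + |(l ^ s' * α : ℝ) / (lam : ℝ) - (u2 : ℝ)| +
        |(l ^ s' * α : ℝ) / (lam : ℝ) - (u3 : ℝ)| < 1) ∧
    (∃ u1 u2 u3 : ℤ, Odd (u1 + u2 + u3) ∧
      |(l ^ s * α : ℝ) / (lam : ℝ) - (u1 : ℝ)| + |(l ^ s * α : ℝ) / (lam : ℝ) - (u2 : ℝ)| +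
        |(l ^ s * α : ℝ) / (lam : ℝ) - (u3 : ℝ)| < 1 ∧
      |(l ^ s * α : ℝ) / (lam : ℝ) - (u1 : ℝ)| + |(l ^ s * α : ℝ) / (lam : ℝ) - (u2 : ℝ)| +
        |(l ^ s * α : ℝ) / (lam : ℝ) - (u3 : ℝ)| = 3 * |(l ^ s * α : ℝ) / (lam : ℝ) - 1|) :=
  stmt_17_general (mod_cast hl) (mod_cast hlow) (mod_cast hhigh)
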